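/- Let n ≥ 1 and let π, σ be type D elements of S_{2n}, where π is a descending shuffle. If σ ≼ π (the tableau-criterion dominance, i.e., condition (1) of the Billey–Lakshmibai criterion), then the pair (σ, π) satisfies condition (2). Consequently, for elements w, u of the type D Weyl group whose images in S_{2n} are σ and π respectively, w ≤ u in the type D Bruhat order if and only if σ ≤ π in the Bruhat order on S_{2n}. -/

import Mathlib

/- Permutations of {1,…,2n} are modeled zero-based as `Equiv.Perm (Fin (2*n))`;
the one-based position/value `a` corresponds to the zero-based `a - 1`, so
"`2n+1-i`" becomes `Fin.rev`, "value `> n`" becomes `n ≤ ·` on zero-based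
values, and `|a| = min(a, 2n+1-a)` becomes `fun v => min (v+1) (2*n - v)` on a
zero-based value `v`. -/

/-- A signed element of `S_{2n}`. -/
def IsSignedElt (n : ℕ) (π : Equiv.Perm (Fin (2 * n))) : Prop :=
  ∀ i, π i.rev = (π i).rev

/-- A type D element of `S_{2n}`: signed, with `#{i ∈ {1,…,n} : π(i) > n}` even. -/
def IsTypeDElt (n : ℕ) (π : Equiv.Perm (Fin (2 * n))) : Prop :=
  IsSignedElt n π ∧
    Even (Finset.univ.filter (fun i : Fin (2 * n) =>
      (i : ℕ) < n ∧ n ≤ (π i : ℕ))).card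

/-- A descending shuffle: the values `n, n-1, …, 1` appear in this relative order
and the values `2n, 2n-1, …, n+1` appear in this relative order. -/
def IsDescShuffle (n : ℕ) (π : Equiv.Perm (Fin (2 * n))) : Prop :=
  ∀ i j : Fin (2 * n), i < j →
    (((π i : ℕ) < n ∧ (π j : ℕ) < n) ∨ (n ≤ (π i : ℕ) ∧ n ≤ (π j : ℕ))) →
    π j < π i

/-- `sortd n d π` : the first `d` values of `π`, sorted increasingly
(the sequence `sort_d(π)`). -/
def sortd (n d : ℕ) (π : Equiv.Perm (Fin (2 * n))) : List ℕ :=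
  ((Finset.univ.filter (fun i : Fin (2 * n) => (i : ℕ) < d)).image
    (fun i => (π i : ℕ))).sort (· ≤ ·)

/-- Condition (1) of the Billey–Lakshmibai criterion: the tableau-criterion
dominance `σ ≼ π`, entrywise comparison of `sort_d(σ)` and `sort_d(π)` for all
`1 ≤ d ≤ n`. -/
def Dominates (n : ℕ) (σ π : Equiv.Perm (Fin (2 * n))) : Prop :=
  ∀ d, 1 ≤ d → d ≤ n → ∀ j, j < d →
    (sortd n d σ).getD j 0 ≤ (sortd n d π).getD j 0

/-- Condition (2) of the Billey–Lakshmibai criterion for the pair `(σ, π)`. -/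
def Cond2 (n : ℕ) (σ π : Equiv.Perm (Fin (2 * n))) : Prop :=
  ∀ d, 1 ≤ d → d ≤ n → ∀ i r : ℕ, 1 ≤ r → i + r ≤ d →
    ((((sortd n d σ).drop i).take r).map (fun v => min (v + 1) (2 * n - v))).toFinset
        = Finset.Icc (n + 1 - r) n →
    ((((sortd n d π).drop i).take r).map (fun v => min (v + 1) (2 * n - v))).toFinset
        = Finset.Icc (n + 1 - r) n →
    (((sortd n d σ).drop i).take r).countP (fun v => decide (n ≤ v)) % 2
      = (((sortd n d π).drop i).take r).countP (fun v => decide (n ≤ v)) % 2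

theorem mem_sortd (n d : ℕ) (π : Equiv.Perm (Fin (2 * n))) (v : ℕ) :
    v ∈ sortd n d π ↔ ∃ p : Fin (2 * n), (p : ℕ) < d ∧ (π p : ℕ) = v := by
  simp [sortd]

theorem length_sortd (n d : ℕ) (hd : d ≤ n) (π : Equiv.Perm (Fin (2 * n))) :
    (sortd n d π).length = d := by
  unfold sortd
  rw [Finset.length_sort, Finset.card_image_of_injective _
    (fun a b h => π.injective (Fin.ext h))]
  rw [Fin.card_filter_val_lt]
  omega

theorem pairwise_sortd (n d : ℕ) (π : Equiv.Perm (Fin (2 * n))) :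
    (sortd n d π).Pairwise (· < ·) := by
  unfold sortd
  exact Finset.sortedLT_sort _ |>.pairwise

theorem countP_sortd (n d : ℕ) (π : Equiv.Perm (Fin (2 * n))) :
    (sortd n d π).countP (fun v => decide (n ≤ v)) =
      (Finset.univ.filter (fun i : Fin (2 * n) => (i : ℕ) < d ∧ n ≤ (π i : ℕ))).card := by
  have hinj : Function.Injective (fun i : Fin (2 * n) => (π i : ℕ)) :=
    fun a b h => π.injective (Fin.ext h)
  rw [List.countP_eq_length_filter,
    ← List.toFinset_card_of_nodup (((pairwise_sortd n d π).imp (fun h => h.ne)).filter _),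
    ← Finset.card_image_of_injective _ hinj]
  congr 1
  ext v
  simp only [List.mem_toFinset, List.mem_filter, mem_sortd, Finset.mem_image, Finset.mem_filter,
    Finset.mem_univ, true_and, decide_eq_true_eq]
  constructor
  · rintro ⟨⟨p, hp, rfl⟩, h⟩
    exact ⟨p, ⟨hp, h⟩, rfl⟩
  · rintro ⟨p, ⟨hp, h⟩, rfl⟩
    exact ⟨⟨p, hp, rfl⟩, h⟩

/-- Among the first `d ≤ n` values of a signed element, absolute values are distinct. -/
theorem abs_inj_sortd (n d : ℕ) (hd : d ≤ n) (π : Equiv.Perm (Fin (2 * n)))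
    (hs : IsSignedElt n π) (v w : ℕ) (hv : v ∈ sortd n d π) (hw : w ∈ sortd n d π)
    (h : min (v + 1) (2 * n - v) = min (w + 1) (2 * n - w)) : v = w := by
  obtain ⟨p, hp, rfl⟩ := (mem_sortd _ _ _ _).1 hv
  obtain ⟨q, hq, rfl⟩ := (mem_sortd _ _ _ _).1 hw
  by_contra hne
  have h1 := (π p).isLt
  have h2 := (π q).isLt
  have h3 : π p = (π q).rev := by
    apply Fin.ext
    rw [Fin.val_rev]
    omega
  rw [← hs] at h3
  have h4 := congrArg Fin.val (π.injective h3)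
  rw [Fin.val_rev] at h4
  omega

/-- For `d = n` and an initial window, the parity is forced by the type D condition. -/
theorem parity_initial (n : ℕ) (π : Equiv.Perm (Fin (2 * n))) (hπ : IsTypeDElt n π)
    (r : ℕ) (hr : 1 ≤ r) (hrn : r ≤ n)
    (h : (((sortd n n π).take r).map (fun v => min (v + 1) (2 * n - v))).toFinset
        = Finset.Icc (n + 1 - r) n) :
    (((sortd n n π).take r).countP (fun v => decide (n ≤ v)) + (n - r)) % 2 = 0 := by
  have htot := hπ.2
  rw [← countP_sortd n n π] at htot
  have hlen := length_sortd n n le_rfl π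
  have hpw := pairwise_sortd n n π
  generalize sortd n n π = L at *
  have hsplit := List.take_append_drop r L
  have hpw' := hpw
  rw [← hsplit, List.pairwise_append] at hpw'
  have hdrop : (L.drop r).countP (fun v => decide (n ≤ v)) = n - r := by
    have : (L.drop r).length = n - r := by simp [hlen]
    rw [← this, List.countP_eq_length]
    intro b hb
    rw [decide_eq_true_eq]
    by_contra hlt
    have hmem : n ∈ Finset.Icc (n + 1 - r) n := Finset.mem_Icc.2 ⟨by omega, le_rfl⟩
    rw [← h, List.mem_toFinset, List.mem_map] at hmem
    obtain ⟨a, ha, hab⟩ := hmem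
    have := hpw'.2.2 a ha b hb
    omega
  rw [← hsplit, List.countP_append, hdrop] at htot
  exact Nat.even_iff.1 htot

/-- A window of a descending shuffle reaching a large value is an initial window with `d = n`. -/
theorem window_initial (n d : ℕ) (hd : d ≤ n) (π : Equiv.Perm (Fin (2 * n)))
    (hs : IsSignedElt n π) (hdesc : IsDescShuffle n π) (i r : ℕ) (hr : 1 ≤ r) (hir : i + r ≤ d)
    (h : ((((sortd n d π).drop i).take r).map (fun v => min (v + 1) (2 * n - v))).toFinset
        = Finset.Icc (n + 1 - r) n)
    (x : ℕ) (hx : x ∈ ((sortd n d π).drop i).take r) (hxn : n ≤ x) : d = n ∧ i = 0 := by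
  have hlen := length_sortd n d hd π
  have hpw := pairwise_sortd n d π
  have hxL : x ∈ sortd n d π := List.mem_of_mem_drop (List.mem_of_mem_take hx)
  have hup : ∀ v, x ≤ v → v < 2 * n → v ∈ sortd n d π := by
    intro v hv hvn
    obtain ⟨p, hp, hpx⟩ := (mem_sortd _ _ _ _).1 hxL
    rw [mem_sortd]
    refine ⟨π.symm ⟨v, hvn⟩, ?_, by simp⟩
    by_contra hlt
    have hpq : p < π.symm ⟨v, hvn⟩ := by
      rw [Fin.lt_def]; omega
    have := hdesc p _ hpq (Or.inr (by simp; omega))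
    rw [Fin.lt_def] at this
    simp at this
    omega
  have hxlt : x < 2 * n := by
    obtain ⟨p, hp, hpx⟩ := (mem_sortd _ _ _ _).1 hxL
    have := (π p).isLt
    omega
  have hxabs : n + 1 - r ≤ 2 * n - x := by
    have : min (x + 1) (2 * n - x) ∈ Finset.Icc (n + 1 - r) n := by
      rw [← h, List.mem_toFinset, List.mem_map]
      exact ⟨x, hx, rfl⟩
    rw [Finset.mem_Icc] at this
    omega
  constructor
  · have hsub : Finset.Icc 1 n ⊆
        (sortd n d π).toFinset.image (fun v => min (v + 1) (2 * n - v)) := by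
      intro y hy
      rw [Finset.mem_Icc] at hy
      rw [Finset.mem_image]
      by_cases hy2 : y < n + 1 - r
      · refine ⟨2 * n - y, List.mem_toFinset.2 (hup _ (by omega) (by omega)), ?_⟩
        omega
      · have : y ∈ Finset.Icc (n + 1 - r) n := Finset.mem_Icc.2 ⟨by omega, hy.2⟩
        rw [← h, List.mem_toFinset, List.mem_map] at this
        obtain ⟨a, ha, hay⟩ := this
        exact ⟨a, List.mem_toFinset.2 (List.mem_of_mem_drop (List.mem_of_mem_take ha)), hay⟩
    have h1 := Finset.card_le_card hsub
    have h2 := (Finset.card_image_le (s := (sortd n d π).toFinset)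
      (f := fun v => min (v + 1) (2 * n - v)))
    have h3 := List.toFinset_card_le (sortd n d π)
    rw [Nat.card_Icc] at h1
    omega
  · by_contra hi
    have hpw' := hpw
    rw [← List.take_append_drop i (sortd n d π), List.pairwise_append] at hpw'
    obtain ⟨c, hc⟩ : ∃ c, c ∈ (sortd n d π).take i := by
      apply List.exists_mem_of_length_pos
      rw [List.length_take]
      omega
    have hcL := List.mem_of_mem_take hc
    have hcx := hpw'.2.2 c hc x (List.mem_of_mem_take hx)
    by_cases hcy : n + 1 - r ≤ min (c + 1) (2 * n - c)
    · have : min (c + 1) (2 * n - c) ∈ Finset.Icc (n + 1 - r) n :=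
        Finset.mem_Icc.2 ⟨hcy, by omega⟩
      rw [← h, List.mem_toFinset, List.mem_map] at this
      obtain ⟨a, ha, hac⟩ := this
      have := abs_inj_sortd n d hd π hs a c
        (List.mem_of_mem_drop (List.mem_of_mem_take ha)) hcL hac
      have := hpw'.2.2 c hc a (List.mem_of_mem_take ha)
      omega
    · have := abs_inj_sortd n d hd π hs (2 * n - min (c + 1) (2 * n - c)) c
        (hup _ (by omega) (by omega)) hcL (by omega)
      omega

theorem cond2_of_dominates (n : ℕ) (π σ : Equiv.Perm (Fin (2 * n)))
    (hπ : IsTypeDElt n π) (hσ : IsTypeDElt n σ) (hdesc : IsDescShuffle n π)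
    (hdom : Dominates n σ π) : Cond2 n σ π := by
  intro d hd1 hdn i r hr hir hwσ hwπ
  by_cases hx : ∃ x ∈ ((sortd n d π).drop i).take r, n ≤ x
  · obtain ⟨x, hx, hxn⟩ := hx
    obtain ⟨rfl, rfl⟩ := window_initial n d hdn π hπ.1 hdesc i r hr hir hwπ x hx hxn
    rw [List.drop_zero] at hwσ hwπ ⊢
    rw [List.drop_zero]
    have h1 := parity_initial d π hπ r hr (by omega) hwπ
    have h2 := parity_initial d σ hσ r hr (by omega) hwσ
    omega
  · push Not at hx
    have hlπ := length_sortd n d hdn π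
    have hlσ := length_sortd n d hdn σ
    have hlast : (sortd n d π)[i + r - 1]'(by omega) < n := by
      apply hx
      rw [List.mem_iff_getElem]
      refine ⟨r - 1, by simp; omega, ?_⟩
      simp only [List.getElem_take, List.getElem_drop]
      congr 1
      omega
    have hle := hdom d hd1 hdn (i + r - 1) (by omega)
    rw [List.getD_eq_getElem _ _ (by omega), List.getD_eq_getElem _ _ (by omega)] at hle
    have hz : (((sortd n d π).drop i).take r).countP (fun v => decide (n ≤ v)) = 0 := by
      rw [List.countP_eq_zero]
      intro a ha
      simpa using hx a ha
    have hz' : (((sortd n d σ).drop i).take r).countP (fun v => decide (n ≤ v)) = 0 := by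
      rw [List.countP_eq_zero]
      intro a ha
      rw [List.mem_iff_getElem] at ha
      obtain ⟨k, hk, rfl⟩ := ha
      simp only [List.length_take, List.length_drop] at hk
      simp only [List.getElem_take, List.getElem_drop, decide_eq_true_eq, not_le]
      have hmono := (pairwise_sortd n d σ).sortedLT.strictMono_get.monotone
        (show (⟨i + k, by omega⟩ : Fin (sortd n d σ).length) ≤ ⟨i + r - 1, by omega⟩ by
          rw [Fin.le_def]; simp; omega)
      simp only [List.get_eq_getElem] at hmono
      omega
    rw [hz, hz']

/-- if `π, σ` are type D elements of `S_{2n}` with `π` a descending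
shuffle, and `σ ≼ π` (condition (1)), then `(σ, π)` satisfies condition (2).
Consequently (since the type D Bruhat order is characterized by conditions (1)
and (2) together, and the Bruhat order on `S_{2n}` restricted to signed elements
by condition (1) alone), `w ≤ u` in the type D Bruhat order iff `σ ≤ π` in the
Bruhat order on `S_{2n}`. -/
theorem stmt_5 (n : ℕ) (hn : 1 ≤ n) (π σ : Equiv.Perm (Fin (2 * n)))
    (hπ : IsTypeDElt n π) (hσ : IsTypeDElt n σ) (hdesc : IsDescShuffle n π) :
    (Dominates n σ π → Cond2 n σ π) ∧
    ((Dominates n σ π ∧ Cond2 n σ π) ↔ Dominates n σ π) := by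
  have h := cond2_of_dominates n π σ hπ hσ hdesc
  exact ⟨h, fun hh => hh.1, fun hh => ⟨hh, h hh⟩⟩
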